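/- arXiv:1209.2300 — 8 statements merged into one kernel-verified Lean document; each statement's English description precedes it below -/
import Mathlib

section
/- Let X be a finite metric space. Then the function t ↦ E₀(tX) is monotonically increasing on (0,∞), where tX denotes X with all distances multiplied by t. -/
/-- The spread `E₀` of a finite type, as a function of an arbitrary real-valued kernel `d` in the
role of the distance. The scaled space `tX` then corresponds to the kernel `t • d` on the same
points. -/
noncomputable def spread {X : Type*} [Fintype X] (d : X → X → ℝ) : ℝ :=
  ∑ x, (∑ x', Real.exp (-d x x'))⁻¹

theorem spread_mono {X : Type*} [Fintype X] : Monotone (spread (X := X)) := by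
  intro d d' hdd'
  unfold spread
  gcongr with x _ x' _
  · exact Finset.sum_pos (fun _ _ => Real.exp_pos _) ⟨x, Finset.mem_univ x⟩
  · exact hdd' x x'

theorem spread_monotone_in_scale_general {X : Type*} [Fintype X] {d : X → X → ℝ} (hd : 0 ≤ d) :
    Monotone fun t : ℝ => spread (t • d) :=
  fun _ _ hst => spread_mono (smul_le_smul_of_nonneg_right hst hd)

/-- For a finite metric space `X`, the spread `E₀(tX)` of the space with all
distances scaled by `t` is monotonically increasing in `t` on `(0, ∞)`. -/
theorem spread_monotone_in_scale
    (X : Type*) [MetricSpace X] [Fintype X]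
    (s t : ℝ) (hs : 0 < s) (hst : s ≤ t) :
    ∑ x : X, (∑ x' : X, Real.exp (-(s * dist x x')))⁻¹ ≤
      ∑ x : X, (∑ x' : X, Real.exp (-(t * dist x x')))⁻¹ :=
  spread_monotone_in_scale_general (d := dist) (fun _ _ => dist_nonneg) hst
end

section
/- Let X be a finite metric space with points x₁,…,x_N and let Z be the N×N matrix with entries Z_{ij} = e^{−d(x_i,x_j)}. If Z is positive definite, then the spread of X is bounded above by the magnitude of X: Σ_{i=1}^N (Σ_{j=1}^N Z_{ij})^{−1} ≤ Σ_{i,j=1}^N (Z^{−1})_{ij}. -/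
/-!
A weighting `w`, that is, a solution of `Z w = 1`, satisfies `2 ∑ᵢ vᵢ - vᵀ Z v ≤ ∑ᵢ wᵢ` for every
vector `v`, because `(w - v)ᵀ Z (w - v) ≥ 0`. Take for `v` the vector of inverse row sums of `Z`.
Since `2 vᵢ vⱼ ≤ vᵢ² + vⱼ²` and `Z` is symmetric with nonnegative entries, the form `vᵀ Z v` is at
most `∑ᵢ vᵢ² (∑ⱼ Zᵢⱼ) = ∑ᵢ vᵢ`, so the left side is at least `∑ᵢ vᵢ`, the spread. The sum `∑ᵢ wᵢ`
is the magnitude, also for singular `Z`; when `Z` is invertible, `w = Z⁻¹ 1`.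
-/

open Matrix

section

variable {n R : Type*} [Fintype n]

theorem dotProduct_mulVec_add_le_of_posSemidef
    [Ring R] [PartialOrder R] [IsOrderedAddMonoid R] [StarRing R]
    {A : Matrix n n R} (hA : A.PosSemidef) (v w : n → R) :
    star v ⬝ᵥ A *ᵥ w + star w ⬝ᵥ A *ᵥ v ≤ star v ⬝ᵥ A *ᵥ v + star w ⬝ᵥ A *ᵥ w := by
  rw [← sub_nonneg]
  convert hA.dotProduct_mulVec_nonneg (w - v) using 1
  simp only [star_sub, mulVec_sub, sub_dotProduct, dotProduct_sub]
  abel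

theorem dotProduct_mulVec_self_le_sum_sq_mul_sum
    [CommRing R] [LinearOrder R] [IsStrictOrderedRing R]
    {A : Matrix n n R} (hA : A.IsSymm) (hA₀ : ∀ i j, 0 ≤ A i j) (v : n → R) :
    v ⬝ᵥ A *ᵥ v ≤ ∑ i, v i ^ 2 * ∑ j, A i j := by
  have sum_col : ∑ i, ∑ j, A i j * v j ^ 2 = ∑ i, ∑ j, A i j * v i ^ 2 := by
    rw [Finset.sum_comm]
    simp only [hA.apply]
  refine le_of_mul_le_mul_left ?_ (zero_lt_two' R)
  calc
    2 * (v ⬝ᵥ A *ᵥ v) = ∑ i, ∑ j, A i j * (2 * v i * v j) := by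
      simp only [dotProduct, mulVec, Finset.mul_sum]
      congr! 2
      ring
    _ ≤ ∑ i, ∑ j, A i j * (v i ^ 2 + v j ^ 2) := by
      gcongr with i _ j _
      · exact hA₀ i j
      · exact two_mul_le_add_sq (v i) (v j)
    _ = 2 * ∑ i, ∑ j, A i j * v i ^ 2 := by
      simp only [mul_add, Finset.sum_add_distrib, sum_col, two_mul]
    _ = 2 * ∑ i, v i ^ 2 * ∑ j, A i j := by
      simp only [mul_comm (v _ ^ 2), Finset.sum_mul]

theorem two_mul_sum_sub_dotProduct_mulVec_self_le_of_mulVec_eq_one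
    [CommRing R] [PartialOrder R] [IsOrderedAddMonoid R] [StarRing R] [TrivialStar R]
    {A : Matrix n n R} (hA : A.PosSemidef) {w : n → R} (hw : A *ᵥ w = 1) (v : n → R) :
    2 * ∑ i, v i - v ⬝ᵥ A *ᵥ v ≤ ∑ i, w i := by
  have hA_symm : Aᵀ = A := isHermitian_iff_isSymm.mp hA.isHermitian
  have sum_v : w ⬝ᵥ A *ᵥ v = ∑ i, v i := by
    rw [dotProduct_mulVec, ← mulVec_transpose, hA_symm, hw, one_dotProduct]
  have h := dotProduct_mulVec_add_le_of_posSemidef hA v w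
  simp only [star_trivial, hw, dotProduct_one, sum_v] at h
  rwa [two_mul, sub_le_iff_le_add']

theorem spread_le_magnitude_of_posDef_general
    [Field R] [LinearOrder R] [IsStrictOrderedRing R] [StarRing R] [TrivialStar R]
    {Z : Matrix n n R} (hZ : Z.PosSemidef) (hZ₀ : ∀ i j, 0 ≤ Z i j)
    {w : n → R} (hw : Z *ᵥ w = 1) :
    ∑ i, (∑ j, Z i j)⁻¹ ≤ ∑ i, w i := by
  let v (i : n) : R := (∑ j, Z i j)⁻¹
  have form_le : v ⬝ᵥ Z *ᵥ v ≤ ∑ i, v i :=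
    calc
      v ⬝ᵥ Z *ᵥ v ≤ ∑ i, v i ^ 2 * ∑ j, Z i j :=
        dotProduct_mulVec_self_le_sum_sq_mul_sum
          (isHermitian_iff_isSymm.mp hZ.isHermitian) hZ₀ v
      _ = ∑ i, v i := Finset.sum_congr rfl fun i _ => by
        simpa only [v, sq, inv_inv] using mul_self_mul_inv (v i)
  calc
    ∑ i, v i ≤ 2 * ∑ i, v i - v ⬝ᵥ Z *ᵥ v := by linarith
    _ ≤ ∑ i, w i :=
      two_mul_sum_sub_dotProduct_mulVec_self_le_of_mulVec_eq_one hZ hw v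

end

/-- If the similarity matrix `Z_{ij} = e^{-d(x_i,x_j)}` of a finite metric space
is positive definite, then the spread is bounded above by the magnitude:
`∑_i (∑_j Z_{ij})⁻¹ ≤ ∑_{i,j} (Z⁻¹)_{ij}`. -/
theorem spread_le_magnitude_of_posDef
    (X : Type*) [MetricSpace X] [Fintype X] [DecidableEq X]
    (Z : Matrix X X ℝ)
    (hZ : Z = Matrix.of fun i j => Real.exp (-dist i j))
    (hpd : Z.PosDef) :
    ∑ i : X, (∑ j : X, Z i j)⁻¹ ≤ ∑ i : X, ∑ j : X, Z⁻¹ i j := by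
  have hw : Z *ᵥ (Z⁻¹ *ᵥ 1) = 1 := by
    rw [mulVec_mulVec, mul_nonsing_inv _ hpd.det_pos.ne'.isUnit, one_mulVec]
  simpa only [mulVec, dotProduct_one] using
    spread_le_magnitude_of_posDef_general hpd.posSemidef (by simp [hZ, Real.exp_nonneg]) hw
end

section
/- Let X be a homogeneous finite metric space with N points, i.e. for every pair of points x, y ∈ X there is a distance-preserving bijection f : X → X with f(x) = y. Then there exists a weighting w : X → ℝ (meaning Σ_{x∈X} w(x) e^{−d(x,y)} = 1 for all y ∈ X) whose total weight equals the spread: Σ_{x∈X} w(x) = E₀(X). -/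
/-!
The weighting is made of the summands of the spread itself, the reciprocals of the row sums of
`e^{-d}`. An isometry taking `x` to `y` carries the row of `x` to a rearrangement of the row of `y`,
so in a homogeneous space all row sums agree; by symmetry of `d` they are also the column sums,
which the reciprocals normalise to `1`.
-/

theorem sum_inv_rowSum_mul_eq_one {X 𝕜 : Type*} [Fintype X] [DivisionSemiring 𝕜]
    {K : X → X → 𝕜} {y : X} (hsymm : ∀ x, K x y = K y x)
    (hconst : ∀ x, ∑ z, K x z = ∑ z, K y z) (hne : ∑ z, K y z ≠ 0) :
    ∑ x, (∑ z, K x z)⁻¹ * K x y = 1 :=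
  calc
    ∑ x, (∑ z, K x z)⁻¹ * K x y = ∑ x, (∑ z, K y z)⁻¹ * K y x :=
      Fintype.sum_congr _ _ fun x ↦ by rw [hconst, hsymm]
    _ = (∑ z, K y z)⁻¹ * ∑ x, K y x := (Finset.mul_sum ..).symm
    _ = 1 := inv_mul_cancel₀ hne

section TotalSimilarity

variable {X Y : Type*} [PseudoMetricSpace X] [Fintype X] [PseudoMetricSpace Y] [Fintype Y]

/-- The total similarity of the points of a finite space to `x`, where points at distance `d` have
similarity `e^{-d}`: the row sum at `x` of the similarity matrix, whose reciprocal is the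
contribution of `x` to the spread. -/
noncomputable def totalSimilarity (x : X) : ℝ :=
  ∑ x', Real.exp (-dist x x')

theorem totalSimilarity_pos (x : X) : 0 < totalSimilarity x :=
  Finset.sum_pos (fun _ _ ↦ Real.exp_pos _) ⟨x, Finset.mem_univ x⟩

theorem totalSimilarity_isometryEquiv_apply (f : X ≃ᵢ Y) (x : X) :
    totalSimilarity (f x) = totalSimilarity x :=
  .symm <| Fintype.sum_equiv f.toEquiv _ _ fun x' ↦
    congrArg (fun d ↦ Real.exp (-d)) (f.dist_eq x x').symm

theorem sum_inv_totalSimilarity_mul_exp_neg_dist {y : X}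
    (hconst : ∀ x : X, totalSimilarity x = totalSimilarity y) :
    ∑ x, (totalSimilarity x)⁻¹ * Real.exp (-dist x y) = 1 :=
  sum_inv_rowSum_mul_eq_one (fun x ↦ by rw [dist_comm]) hconst (totalSimilarity_pos y).ne'

end TotalSimilarity

theorem homogeneous_weighting_total_eq_spread_general
    (X : Type*) [PseudoMetricSpace X] [Fintype X]
    (hconst : ∀ x y : X, totalSimilarity x = totalSimilarity y) :
    ∃ w : X → ℝ,
      (∀ y : X, ∑ x : X, w x * Real.exp (-dist x y) = 1) ∧
      ∑ x : X, w x = ∑ x : X, (∑ x' : X, Real.exp (-dist x x'))⁻¹ :=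
  ⟨fun x ↦ (totalSimilarity x)⁻¹,
    fun y ↦ sum_inv_totalSimilarity_mul_exp_neg_dist fun x ↦ hconst x y, rfl⟩

/-- A homogeneous finite metric space admits a weighting whose total weight
equals the spread: the magnitude and the spread coincide. -/
theorem homogeneous_weighting_total_eq_spread
    (X : Type*) [MetricSpace X] [Fintype X]
    (hhom : ∀ x y : X, ∃ f : X ≃ᵢ X, f x = y) :
    ∃ w : X → ℝ,
      (∀ y : X, ∑ x : X, w x * Real.exp (-dist x y) = 1) ∧
      ∑ x : X, w x = ∑ x : X, (∑ x' : X, Real.exp (-dist x x'))⁻¹ := by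
  refine homogeneous_weighting_total_eq_spread_general X fun x y ↦ (hhom x y).elim fun f hf ↦ ?_
  rw [← hf, totalSimilarity_isometryEquiv_apply]
end

section
/- Let X be a homogeneous finite metric space with N points x₁,…,x_N, i.e. for every pair of points there is a distance-preserving bijection of X sending one to the other. Then for every real q ≥ 0 with q ≠ 1 and every point x₀ ∈ X, the q-spread satisfies E_q(X) = N/(Σ_{x'∈X} e^{−d(x₀,x')}). -/
/-- The reciprocal mean similarity `ρ_x = N / ∑_y e^{-d(x,y)}` of a point `x`. -/
noncomputable def reciprocalMeanSimilarity {X : Type*} [PseudoMetricSpace X] [Fintype X]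
    (x : X) : ℝ :=
  (Fintype.card X : ℝ) / ∑ y : X, Real.exp (-dist x y)

/-- The `q`-spread `E_q(X)`, the power mean of order `1 - q` of the reciprocal mean similarities.
At `q = 1` the exponent `1 / (1 - q)` is `0`, so the value there is `1` rather than the limit. -/
noncomputable def qSpread (X : Type*) [PseudoMetricSpace X] [Fintype X] (q : ℝ) : ℝ :=
  ((1 / (Fintype.card X : ℝ)) * ∑ x : X, reciprocalMeanSimilarity x ^ (1 - q)) ^ (1 / (1 - q))

theorem sum_dist_isometryEquiv {X Y M : Type*} [PseudoMetricSpace X] [PseudoMetricSpace Y]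
    [Fintype X] [Fintype Y] [AddCommMonoid M] (φ : ℝ → M) (f : X ≃ᵢ Y) (x : X) :
    ∑ y : Y, φ (dist (f x) y) = ∑ x' : X, φ (dist x x') :=
  (Fintype.sum_equiv f.toEquiv _ _ fun x' ↦ congrArg φ (f.dist_eq x x').symm).symm

theorem powerMean_const {ι : Type*} [Fintype ι] [Nonempty ι] {a p : ℝ} (ha : 0 ≤ a)
    (hp : p ≠ 0) : ((1 / (Fintype.card ι : ℝ)) * ∑ _i : ι, a ^ p) ^ (1 / p) = a := by
  have mean_eq : (1 / (Fintype.card ι : ℝ)) * ∑ _i : ι, a ^ p = a ^ p := by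
    simp
  rw [mean_eq, one_div, Real.rpow_rpow_inv ha hp]

section Spread

variable {X Y : Type*} [PseudoMetricSpace X] [PseudoMetricSpace Y] [Fintype X] [Fintype Y]

theorem reciprocalMeanSimilarity_nonneg (x : X) : 0 ≤ reciprocalMeanSimilarity x := by
  unfold reciprocalMeanSimilarity
  positivity

theorem reciprocalMeanSimilarity_isometryEquiv (f : X ≃ᵢ Y) (x : X) :
    reciprocalMeanSimilarity (f x) = reciprocalMeanSimilarity x := by
  rw [reciprocalMeanSimilarity, reciprocalMeanSimilarity, Fintype.card_congr f.toEquiv,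
    sum_dist_isometryEquiv (fun r ↦ Real.exp (-r))]

theorem qSpread_eq_of_forall_reciprocalMeanSimilarity_eq {q : ℝ} (hq : q ≠ 1) {x₀ : X}
    (h : ∀ x : X, reciprocalMeanSimilarity x = reciprocalMeanSimilarity x₀) :
    qSpread X q = reciprocalMeanSimilarity x₀ := by
  have : Nonempty X := ⟨x₀⟩
  simp only [qSpread, h]
  exact powerMean_const (reciprocalMeanSimilarity_nonneg x₀) (sub_ne_zero.mpr hq.symm)

theorem homogeneous_qSpread_general (hhom : ∀ x y : X, ∃ f : X ≃ᵢ X, f x = y)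
    {q : ℝ} (hq : q ≠ 1) (x₀ : X) : qSpread X q = reciprocalMeanSimilarity x₀ := by
  refine qSpread_eq_of_forall_reciprocalMeanSimilarity_eq hq fun x ↦ ?_
  obtain ⟨f, rfl⟩ := hhom x₀ x
  exact reciprocalMeanSimilarity_isometryEquiv f x₀

end Spread

/-- For a homogeneous finite metric space `X` with `N` points, every `q`-spread
(for `q ≥ 0`, `q ≠ 1`) equals `N / ∑_{x'} e^{-d(x₀,x')}` for any point `x₀`. -/
theorem homogeneous_qSpread
    (X : Type*) [MetricSpace X] [Fintype X]
    (hhom : ∀ x y : X, ∃ f : X ≃ᵢ X, f x = y)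
    (q : ℝ) (hq0 : 0 ≤ q) (hq1 : q ≠ 1) (x₀ : X) :
    ((1 / (Fintype.card X : ℝ)) *
        ∑ i : X, ((Fintype.card X : ℝ) / ∑ j : X, Real.exp (-dist i j)) ^ (1 - q))
          ^ (1 / (1 - q)) =
      (Fintype.card X : ℝ) / ∑ x' : X, Real.exp (-dist x₀ x') :=
  homogeneous_qSpread_general hhom hq1 x₀
end

section
/- Let T be a tree (a connected acyclic simple graph) with N ≥ 1 vertices, let d denote the graph (shortest-path) distance on its vertex set, and let t > 0. Then there exists a weighting w on the metric space (V(T), t·d), i.e. a function w : V(T) → ℝ with Σ_{v∈V(T)} w(v) e^{−t·d(v,u)} = 1 for all u ∈ V(T), whose total weight is Σ_{v∈V(T)} w(v) = (N(e^t − 1) + 2)/(e^t + 1). In particular the magnitude of the scaled tree is |tT| = (N(e^t − 1) + 2)/(e^t + 1). -/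
/-!
Root the tree at `u`. Every edge joins a unique vertex `x ≠ u` to its parent, which is one step
closer to `u`, so a sum over vertices weighted by degree, being a sum over the ends of all edges,
collects `f x + f (parent x)` once for each `x ≠ u`. For `f x = q ^ d(x, u)` one has
`q * f (parent x) = f x`, which gives `q * ∑ deg v * q ^ d(v, u) = (1 + q) * (∑ q ^ d(v, u) - 1)`
with coefficients that do not depend on `u`. Hence `w v = 1 - q / (1 + q) * deg v` solves the
weighting equations for all `u` simultaneously, and its total is read off from
`∑ deg v = 2 * (N - 1)`. The theorem is the case `q = exp (-t)`.
-/

open Finset SimpleGraph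

section TreeParent

variable {V : Type*} {G : SimpleGraph V}

/-- The parent of `x` in the tree `G` rooted at `u`: the second vertex on the path from `x` to `u`.
The root is its own parent. -/
noncomputable def treeParent (hG : G.IsTree) (u x : V) : V :=
  (hG.existsUnique_path x u).choose.snd

theorem treeParent_eq_snd (hG : G.IsTree) {u x : V} {p : G.Walk x u} (hp : p.IsPath) :
    treeParent hG u x = p.snd := by
  have h := hG.existsUnique_path x u
  rw [treeParent, h.unique h.choose_spec.1 hp]

theorem treeParent_self (hG : G.IsTree) (u : V) : treeParent hG u u = u :=
  treeParent_eq_snd hG Walk.IsPath.nil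

theorem adj_treeParent (hG : G.IsTree) {u x : V} (hx : x ≠ u) :
    G.Adj x (treeParent hG u x) :=
  Walk.adj_snd (Walk.not_nil_of_ne hx)

theorem dist_eq_dist_treeParent_add_one (hG : G.IsTree) {u x : V} (hx : x ≠ u) :
    G.dist x u = G.dist (treeParent hG u x) u + 1 := by
  obtain ⟨p, hp, hlen⟩ := hG.connected.exists_path_of_dist x u
  have hle : G.dist (treeParent hG u x) u ≤ p.tail.length := by
    rw [treeParent_eq_snd hG hp]
    exact dist_le p.tail
  have htail : p.tail.length + 1 = p.length := Walk.length_tail_add_one (Walk.not_nil_of_ne hx)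
  have hdiff := hG.dist_eq_dist_add_one_of_adj u (adj_treeParent hG hx)
  simp only [dist_comm (u := u)] at hdiff
  lia

theorem treeParent_eq_of_adj_of_dist_eq (hG : G.IsTree) {u x y : V} (hadj : G.Adj x y)
    (hdist : G.dist x u = G.dist y u + 1) : treeParent hG u x = y := by
  obtain ⟨p, hp⟩ := hG.connected.exists_walk_length_eq_dist y u
  have hpath : (Walk.cons hadj p).IsPath :=
    Walk.isPath_of_length_eq_dist _ (by rw [Walk.length_cons, hp, hdist])
  rw [treeParent_eq_snd hG hpath, Walk.snd_cons]

theorem ne_root_and_treeParent_eq_iff (hG : G.IsTree) {u x y : V} :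
    x ≠ u ∧ treeParent hG u x = y ↔ G.Adj x y ∧ G.dist x u = G.dist y u + 1 := by
  constructor
  · rintro ⟨hx, rfl⟩
    exact ⟨adj_treeParent hG hx, dist_eq_dist_treeParent_add_one hG hx⟩
  · rintro ⟨hadj, hdist⟩
    refine ⟨?_, treeParent_eq_of_adj_of_dist_eq hG hadj hdist⟩
    rintro rfl
    simp at hdist

theorem adj_iff_treeParent_eq_or_treeParent_eq (hG : G.IsTree) (u : V) {x y : V} :
    G.Adj x y ↔ (x ≠ u ∧ treeParent hG u x = y) ∨ (y ≠ u ∧ treeParent hG u y = x) := by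
  simp only [ne_root_and_treeParent_eq_iff, G.adj_comm y x, ← and_or_left]
  simpa only [dist_comm (u := u), iff_self_and] using hG.dist_eq_dist_add_one_of_adj u

theorem treeParent_treeParent_ne (hG : G.IsTree) {u x : V} (hx : x ≠ u) :
    treeParent hG u (treeParent hG u x) ≠ x := by
  intro heq
  rcases eq_or_ne (treeParent hG u x) u with hroot | hroot
  · rw [hroot, treeParent_self] at heq
    exact hx heq.symm
  · have hdist := dist_eq_dist_treeParent_add_one hG hx
    have hdist' := dist_eq_dist_treeParent_add_one hG hroot
    rw [heq] at hdist'
    lia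

theorem sum_degree_nsmul_eq_sum_add_treeParent [Fintype V] [DecidableEq V] [DecidableRel G.Adj]
    {M : Type*} [AddCommMonoid M] (hG : G.IsTree) (u : V) (f : V → M) :
    ∑ v, G.degree v • f v = ∑ x ∈ {u}ᶜ, (f x + f (treeParent hG u x)) := by
  have hsplit (v y : V) : (if G.Adj v y then f v else 0) =
      (if v ≠ u ∧ treeParent hG u v = y then f v else 0) +
        (if y ≠ u ∧ treeParent hG u y = v then f v else 0) := by
    have hne : ¬((v ≠ u ∧ treeParent hG u v = y) ∧ (y ≠ u ∧ treeParent hG u y = v)) := by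
      rintro ⟨⟨hv, rfl⟩, -, hvv⟩
      exact treeParent_treeParent_ne hG hv hvv
    simp only [adj_iff_treeParent_eq_or_treeParent_eq hG u]
    split_ifs <;> simp_all
  calc ∑ v, G.degree v • f v
      = ∑ v, ∑ y, if G.Adj v y then f v else 0 := by
        simp_rw [← sum_filter, sum_const, ← neighborFinset_eq_filter, card_neighborFinset_eq_degree]
    _ = (∑ v, ∑ y, if v ≠ u ∧ treeParent hG u v = y then f v else 0) +
          ∑ y, ∑ v, if y ≠ u ∧ treeParent hG u y = v then f v else 0 := by
        simp_rw [hsplit, sum_add_distrib]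
        rw [sum_comm (f := fun v y ↦ if y ≠ u ∧ treeParent hG u y = v then f v else 0)]
    _ = ∑ x ∈ {u}ᶜ, (f x + f (treeParent hG u x)) := by
        simp only [ite_and, sum_add_distrib, compl_singleton, ← filter_ne', sum_filter]
        simp

end TreeParent

section TreeWeight

variable {V : Type*} [Fintype V] {G : SimpleGraph V} [DecidableRel G.Adj]

theorem mul_sum_degree_mul_pow_dist {R : Type*} [CommRing R] (hG : G.IsTree) (q : R) (u : V) :
    q * ∑ v, (G.degree v : R) * q ^ G.dist v u = (1 + q) * (∑ v, q ^ G.dist v u - 1) := by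
  classical
  have hparent (x : V) (hx : x ∈ ({u}ᶜ : Finset V)) :
      q * q ^ G.dist (treeParent hG u x) u = q ^ G.dist x u := by
    rw [dist_eq_dist_treeParent_add_one hG (x := x) (by simpa using hx), pow_succ']
  calc q * ∑ v, (G.degree v : R) * q ^ G.dist v u
      = ∑ x ∈ {u}ᶜ, (q * q ^ G.dist x u + q * q ^ G.dist (treeParent hG u x) u) := by
        simp_rw [← nsmul_eq_mul, sum_degree_nsmul_eq_sum_add_treeParent hG u, mul_sum, mul_add]
    _ = (1 + q) * ∑ x ∈ {u}ᶜ, q ^ G.dist x u := by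
        rw [mul_sum]
        refine sum_congr rfl fun x hx ↦ ?_
        rw [hparent x hx]
        ring
    _ = (1 + q) * (∑ v, q ^ G.dist v u - 1) := by
        rw [Fintype.sum_eq_add_sum_compl u, SimpleGraph.dist_self, pow_zero, add_sub_cancel_left]

theorem sum_degree_eq_two_mul_card_sub_one {R : Type*} [Ring R] (hG : G.IsTree) :
    ∑ v, (G.degree v : R) = 2 * (Fintype.card V - 1) := by
  rw [← Nat.cast_sum, G.sum_degrees_eq_twice_card_edges, ← hG.card_edgeFinset]
  simp

variable {K : Type*} [Field K]

variable (G) in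
/-- The weighting of a tree `G` in which the exponential `exp (-(t * d))` of a distance is written
`q ^ d`, so that `q` stands for `exp (-t)`. It is meaningful for `q ≠ -1` only, division by zero
giving the constant weight `1` at `q = -1`. -/
def treeWeight (q : K) (v : V) : K :=
  1 - q / (1 + q) * G.degree v

theorem sum_treeWeight_mul_pow_dist (hG : G.IsTree) {q : K} (hq : 1 + q ≠ 0) (u : V) :
    ∑ v, treeWeight G q v * q ^ G.dist v u = 1 := by
  have h := mul_sum_degree_mul_pow_dist hG q u
  simp only [treeWeight, sub_mul, one_mul, sum_sub_distrib, mul_assoc, ← mul_sum]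
  rw [div_mul_eq_mul_div, h, mul_div_cancel_left₀ _ hq, sub_sub_cancel]

theorem sum_treeWeight (hG : G.IsTree) {q : K} (hq : 1 + q ≠ 0) :
    ∑ v, treeWeight G q v = (Fintype.card V * (1 - q) + 2 * q) / (1 + q) := by
  simp only [treeWeight, sum_sub_distrib, ← mul_sum, sum_degree_eq_two_mul_card_sub_one hG,
    sum_const, card_univ, nsmul_one]
  field_simp
  ring

end TreeWeight

theorem tree_magnitude_general {V K : Type*} [Fintype V] [Field K] {G : SimpleGraph V}
    (hG : G.IsTree) {q : K} (hq : 1 + q ≠ 0) :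
    ∃ w : V → K,
      (∀ u : V, ∑ v : V, w v * q ^ G.dist v u = 1) ∧
      ∑ v : V, w v = (Fintype.card V * (1 - q) + 2 * q) / (1 + q) := by
  classical
  exact ⟨treeWeight G q, sum_treeWeight_mul_pow_dist hG hq, sum_treeWeight hG hq⟩

/-- For a tree `T` with `N ≥ 1` vertices, the scaled metric space `tT` (with the
shortest-path metric scaled by `t > 0`) admits a weighting whose total weight is
`(N(e^t − 1) + 2)/(e^t + 1)`; i.e. the magnitude is `|tT| = (N(e^t − 1) + 2)/(e^t + 1)`. -/
theorem tree_magnitude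
    (V : Type*) [Fintype V] (G : SimpleGraph V) (hG : G.IsTree)
    (hN : 1 ≤ Fintype.card V) (t : ℝ) (ht : 0 < t) :
    ∃ w : V → ℝ,
      (∀ u : V, ∑ v : V, w v * Real.exp (-(t * (G.dist v u : ℝ))) = 1) ∧
      ∑ v : V, w v =
        ((Fintype.card V : ℝ) * (Real.exp t - 1) + 2) / (Real.exp t + 1) := by
  have hexp (n : ℕ) : Real.exp (-(t * n)) = Real.exp (-t) ^ n := by
    rw [← Real.exp_nat_mul, mul_neg, mul_comm]
  have htotal : (Fintype.card V * (1 - Real.exp (-t)) + 2 * Real.exp (-t)) / (1 + Real.exp (-t)) =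
      (Fintype.card V * (Real.exp t - 1) + 2) / (Real.exp t + 1) := by
    rw [Real.exp_neg]
    field_simp
  simpa only [hexp, htotal] using tree_magnitude_general hG (q := Real.exp (-t)) (by positivity)
end

section
/- Let t > 0 and N ≥ 1, and let tL_N be the linear tree with N points: the metric space {1,…,N} with d(i,j) = t|i−j|. Then its spread is E₀(tL_N) = Σ_{i=1}^N (e^t − 1)/(1 + e^t − e^{−t(i−1)} − e^{−t(N−i)}). -/
/-! The similarities `exp (-(t * |i - j|))` seen from a point `i` of the path are powers of
`q = exp (-t)`. Summing over the points on either side of `i` gives two geometric series, both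
cleared by the factor `1 - q`; scaling by `exp t` turns that factor into `exp t - 1`. -/

open Finset Real

theorem sum_range_pow_natAbs_sub_mul_one_sub {R : Type*} [Ring R] (q : R) (a b : ℕ) :
    (∑ j ∈ range (a + 1 + b), q ^ ((a : ℤ) - j).natAbs) * (1 - q) =
      1 + q - q ^ (a + 1) - q ^ (b + 1) := by
  have left_sum : ∑ j ∈ range (a + 1), q ^ ((a : ℤ) - j).natAbs = ∑ k ∈ range (a + 1), q ^ k := by
    rw [← sum_range_reflect (q ^ ·)]
    refine sum_congr rfl fun j hj => ?_
    have := mem_range.mp hj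
    congr 1
    omega
  have right_sum : ∑ k ∈ range b, q ^ ((a : ℤ) - (a + 1 + k : ℕ)).natAbs =
      q * ∑ k ∈ range b, q ^ k := by
    rw [mul_sum]
    refine sum_congr rfl fun k _ => ?_
    rw [← pow_succ']
    congr 1
    omega
  rw [sum_range_add, left_sum, right_sum, add_mul, mul_assoc, geom_sum_mul_neg, geom_sum_mul_neg,
    mul_sub, mul_one, ← pow_succ']
  abel

theorem exp_neg_mul_abs_natCast_sub (t : ℝ) (i j : ℕ) :
    exp (-(t * |(i : ℝ) - j|)) = exp (-t) ^ ((i : ℤ) - j).natAbs := by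
  rw [← exp_nat_mul, Nat.cast_natAbs]
  push_cast
  ring_nf

theorem sum_exp_neg_mul_abs_sub_mul_exp_sub_one (t : ℝ) {N : ℕ} (i : Fin N) :
    (∑ j : Fin N, exp (-(t * |(i : ℝ) - (j : ℝ)|))) * (exp t - 1) =
      1 + exp t - exp (-(t * (i : ℝ))) - exp (-(t * ((N : ℝ) - 1 - (i : ℝ)))) := by
  obtain ⟨a, ha⟩ := i
  obtain ⟨b, rfl⟩ := Nat.exists_eq_add_of_le (Nat.succ_le_of_lt ha)
  have exp_mul_pow_succ (n : ℕ) : exp t * exp (-t) ^ (n + 1) = exp (-(t * n)) := by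
    rw [← exp_nat_mul, ← exp_add]
    push_cast
    ring_nf
  have exp_mul_exp_neg : exp t * exp (-t) = 1 := by rw [← exp_add, add_neg_cancel, exp_zero]
  have right_length : ((a + 1 + b : ℕ) : ℝ) - 1 - a = b := by push_cast; ring
  calc (∑ j : Fin (a + 1 + b), exp (-(t * |(a : ℝ) - (j : ℝ)|))) * (exp t - 1)
      = exp t * ((∑ j ∈ range (a + 1 + b), exp (-t) ^ ((a : ℤ) - j).natAbs) *
          (1 - exp (-t))) := by
        rw [Fin.sum_univ_eq_sum_range (fun j => exp (-(t * |(a : ℝ) - j|)))]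
        simp only [exp_neg_mul_abs_natCast_sub]
        linear_combination (∑ j ∈ range (a + 1 + b), exp (-t) ^ ((a : ℤ) - j).natAbs) *
          exp_mul_exp_neg
    _ = exp t * (1 + exp (-t) - exp (-t) ^ (a + 1) - exp (-t) ^ (b + 1)) := by
        rw [sum_range_pow_natAbs_sub_mul_one_sub]
    _ = 1 + exp t - exp (-(t * a)) - exp (-(t * ((a + 1 + b : ℕ) - 1 - a))) := by
        rw [right_length, mul_sub, mul_sub, mul_add, mul_one, exp_mul_exp_neg, exp_mul_pow_succ,
          exp_mul_pow_succ, add_comm (exp t)]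

theorem spread_linear_tree_general (N : ℕ) {t : ℝ} (ht : t ≠ 0) :
    ∑ i : Fin N, (∑ j : Fin N, exp (-(t * |(i : ℝ) - (j : ℝ)|)))⁻¹ =
      ∑ i : Fin N,
        (exp t - 1) /
          (1 + exp t - exp (-(t * (i : ℝ))) - exp (-(t * ((N : ℝ) - 1 - (i : ℝ))))) := by
  have exp_sub_one_ne_zero : exp t - 1 ≠ 0 := sub_ne_zero.mpr ((exp_eq_one_iff t).not.mpr ht)
  refine sum_congr rfl fun i _ => ?_
  rw [← sum_exp_neg_mul_abs_sub_mul_exp_sub_one, div_mul_cancel_right₀ exp_sub_one_ne_zero]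

/-- The spread of the linear tree `tL_N`, i.e. the metric space `{1, …, N}` with
`d(i,j) = t|i−j|`, is `∑_{i=1}^N (e^t − 1)/(1 + e^t − e^{−t(i−1)} − e^{−t(N−i)})`.
(Here the points are indexed by `Fin N`, so `i : Fin N` corresponds to `i+1`.) -/
theorem spread_linear_tree
    (N : ℕ) (hN : 1 ≤ N) (t : ℝ) (ht : 0 < t) :
    ∑ i : Fin N, (∑ j : Fin N, Real.exp (-(t * |(i : ℝ) - (j : ℝ)|)))⁻¹ =
      ∑ i : Fin N,
        (Real.exp t - 1) /
          (1 + Real.exp t - Real.exp (-(t * (i : ℝ)))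
            - Real.exp (-(t * ((N : ℝ) - 1 - (i : ℝ))))) :=
  spread_linear_tree_general N ht.ne'
end

section
/- Let K_{3,2} be the five-point metric space {a₁,a₂,a₃,b₁,b₂} with d(a_i, b_j) = 1 for all i,j, d(a_i, a_j) = 2 for i ≠ j, and d(b_1, b_2) = 2, and let t = ln(√2) = (1/2)ln 2. Then the scaled space tK_{3,2} admits no weighting: there is no function w on the five points with Σ_x w(x) e^{−t·d(x,y)} = 1 for all points y. In particular tK_{3,2} has no magnitude at this value of t. -/
/-- The metric of the five-point space `K_{3,2}`: points on the same side of the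
bipartition are at distance `2`, points on opposite sides at distance `1`. -/
def K32dist : (Fin 3 ⊕ Fin 2) → (Fin 3 ⊕ Fin 2) → ℝ
  | Sum.inl i, Sum.inl j => if i = j then 0 else 2
  | Sum.inr i, Sum.inr j => if i = j then 0 else 2
  | _, _ => 1

/-!
The matrix `Z = (q ^ d(x, y))` of a complete bipartite graph with parts of sizes `m` and `n` maps
vectors that are constant on each part to vectors of the same kind, acting there by
`!![1 + (m - 1) q², n q; m q, 1 + (n - 1) q²]`, of determinant `(1 - q²) (1 - (m - 1) (n - 1) q²)`.
If `(m - 1) (n - 1) q² = 1`, it therefore has a kernel vector `v` that is constant on each part.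
When `m ≠ n`, the entries of `v` do not sum to zero, whereas a weighting `w` would give
`∑ y, v y = w ᵥ* Z ⬝ᵥ v = w ⬝ᵥ Z *ᵥ v = 0`. For `K_{3,2}` the critical value is `q² = 1 / 2`.
-/

open Matrix

theorem sum_eq_zero_of_vecMul_eq_one_of_mulVec_eq_zero {m n R : Type*} [Fintype m] [Fintype n]
    [Semiring R] {M : Matrix m n R} {w : m → R} {v : n → R} (hw : w ᵥ* M = 1) (hv : M *ᵥ v = 0) :
    ∑ y, v y = 0 :=
  calc ∑ y, v y = w ᵥ* M ⬝ᵥ v := by rw [hw, one_dotProduct]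
    _ = 0 := by rw [← dotProduct_mulVec, hv, dotProduct_zero]

theorem sum_eq_add_card_sub_one_mul {ι R : Type*} [Fintype ι] [Ring R] {f : ι → R} {c : R}
    (i : ι) (hf : ∀ j, i ≠ j → f j = c) : ∑ j, f j = f i + (Fintype.card ι - 1) * c := by
  classical
  have hsum : ∑ j ∈ {i}ᶜ, f j = ∑ _j ∈ ({i}ᶜ : Finset ι), c :=
    Finset.sum_congr rfl fun j hj => hf j (by simpa [eq_comm] using hj)
  rw [Fintype.sum_eq_add_sum_compl i, hsum, Finset.sum_const, nsmul_eq_mul, Finset.card_compl,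
    Finset.card_singleton, Nat.cast_sub (Fintype.card_pos_iff.mpr ⟨i⟩), Nat.cast_one]

theorem nat_eq_of_mul_eq_add {m n : ℕ} (h : m * n = m + n) : m = n :=
  Nat.dvd_antisymm ((Nat.dvd_add_right (dvd_refl m)).mp (h ▸ dvd_mul_right m n))
    ((Nat.dvd_add_left (dvd_refl n)).mp (h ▸ dvd_mul_left n m))

theorem mul_sub_one_mul_ne {R : Type*} [CommRing R] [IsDomain R] [CharZero R] {m n : ℕ}
    (hmn : m ≠ n) {q : R} (hq : ((m : R) - 1) * (n - 1) * q ^ 2 = 1) :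
    m * ((n - 1) * q) ≠ (n : R) := by
  intro h
  -- Square `h` and eliminate `q ^ 2` with `hq`.
  have hfactor : ((m : R) - n) * (m * n - (m + n)) = 0 := by
    linear_combination (m - 1) * (m * (n - 1) * q + n) * h - (m : R) ^ 2 * (n - 1) * hq
  rcases mul_eq_zero.mp hfactor with hsub | hmul
  · exact hmn (Nat.cast_injective (sub_eq_zero.mp hsub))
  · exact hmn (nat_eq_of_mul_eq_add (by exact_mod_cast sub_eq_zero.mp hmul))

/-- The similarity matrix of a graph, with entries `q ^ d(x, y)`. For `q = e⁻ᵗ` it is the matrix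
`(e^{-t d(x, y)})` whose weightings are the vectors `w` with `w ᵥ* similarityMatrix G q = 1`. -/
noncomputable def similarityMatrix {V R : Type*} [Monoid R] (G : SimpleGraph V) (q : R) :
    Matrix V V R :=
  of fun x y => q ^ G.dist x y

theorem dist_eq_two_of_common_neighbor {V : Type*} {G : SimpleGraph V} {x y z : V} (hne : x ≠ y)
    (hxy : ¬G.Adj x y) (hxz : G.Adj x z) (hyz : G.Adj y z) : G.dist x y = 2 := by
  have h : G.edist x y = 2 := SimpleGraph.edist_eq_two_iff.mpr ⟨hne, hxy, z, hxz, hyz⟩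
  simp [SimpleGraph.dist, h]

section CompleteBipartite

variable {α β : Type*}

theorem completeBipartiteGraph_dist_inl_inl [Nonempty β] {a a' : α} (h : a ≠ a') :
    (completeBipartiteGraph α β).dist (Sum.inl a) (Sum.inl a') = 2 :=
  dist_eq_two_of_common_neighbor (z := Sum.inr (Classical.arbitrary β))
    (by simpa using h) (by simp) (by simp) (by simp)

theorem completeBipartiteGraph_dist_inr_inr [Nonempty α] {b b' : β} (h : b ≠ b') :
    (completeBipartiteGraph α β).dist (Sum.inr b) (Sum.inr b') = 2 :=
  dist_eq_two_of_common_neighbor (z := Sum.inl (Classical.arbitrary α))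
    (by simpa using h) (by simp) (by simp) (by simp)

theorem completeBipartiteGraph_dist_inl_inr (a : α) (b : β) :
    (completeBipartiteGraph α β).dist (Sum.inl a) (Sum.inr b) = 1 :=
  SimpleGraph.dist_eq_one_iff_adj.mpr (by simp)

theorem completeBipartiteGraph_dist_inr_inl (a : α) (b : β) :
    (completeBipartiteGraph α β).dist (Sum.inr b) (Sum.inl a) = 1 :=
  SimpleGraph.dist_eq_one_iff_adj.mpr (by simp)

variable [Fintype α] [Fintype β] [Nonempty α] [Nonempty β]

open Fintype (card)

theorem similarityMatrix_completeBipartiteGraph_mulVec {R : Type*} [Ring R] (q r s : R) :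
    similarityMatrix (completeBipartiteGraph α β) q *ᵥ Sum.elim (fun _ => r) (fun _ => s) =
      Sum.elim (fun _ => (1 + (card α - 1) * q ^ 2) * r + card β * q * s)
        (fun _ => card α * q * r + (1 + (card β - 1) * q ^ 2) * s) := by
  have hα (a : α) : ∑ a', q ^ (completeBipartiteGraph α β).dist (Sum.inl a) (Sum.inl a') =
      1 + (card α - 1) * q ^ 2 := by
    rw [sum_eq_add_card_sub_one_mul a fun a' h => by rw [completeBipartiteGraph_dist_inl_inl h],
      SimpleGraph.dist_self, pow_zero]
  have hβ (b : β) : ∑ b', q ^ (completeBipartiteGraph α β).dist (Sum.inr b) (Sum.inr b') =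
      1 + (card β - 1) * q ^ 2 := by
    rw [sum_eq_add_card_sub_one_mul b fun b' h => by rw [completeBipartiteGraph_dist_inr_inr h],
      SimpleGraph.dist_self, pow_zero]
  ext (a | b)
  · simp [mulVec, dotProduct, similarityMatrix, ← Finset.sum_mul, hα,
      completeBipartiteGraph_dist_inl_inr, mul_assoc]
  · simp [mulVec, dotProduct, similarityMatrix, ← Finset.sum_mul, hβ,
      completeBipartiteGraph_dist_inr_inl, mul_assoc]

theorem similarityMatrix_completeBipartiteGraph_mulVec_eq_zero {R : Type*} [CommRing R] {q : R}
    (hq : ((card α : R) - 1) * (card β - 1) * q ^ 2 = 1) :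
    similarityMatrix (completeBipartiteGraph α β) q *ᵥ
      Sum.elim (fun _ => (card β - 1) * q) (fun _ => -1) = 0 := by
  rw [similarityMatrix_completeBipartiteGraph_mulVec]
  ext (a | b)
  · simp only [Sum.elim_inl, Pi.zero_apply]
    linear_combination q * hq
  · simp only [Sum.elim_inr, Pi.zero_apply]
    linear_combination hq

theorem vecMul_similarityMatrix_completeBipartiteGraph_ne_one {R : Type*} [CommRing R]
    [IsDomain R] [CharZero R] {q : R} (hcard : card α ≠ card β)
    (hq : ((card α : R) - 1) * (card β - 1) * q ^ 2 = 1)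
    (w : α ⊕ β → R) : w ᵥ* similarityMatrix (completeBipartiteGraph α β) q ≠ 1 := by
  intro hw
  have hsum := sum_eq_zero_of_vecMul_eq_one_of_mulVec_eq_zero hw
    (similarityMatrix_completeBipartiteGraph_mulVec_eq_zero hq)
  simp only [Fintype.sum_sum_type, Sum.elim_inl, Sum.elim_inr, Finset.sum_const,
    Finset.card_univ, nsmul_eq_mul] at hsum
  exact mul_sub_one_mul_ne hcard hq (by linear_combination hsum)

theorem K32_no_weighting_general {t : ℝ} (hcard : card α ≠ card β)
    (ht : Real.exp (2 * t) = ((card α : ℝ) - 1) * (card β - 1)) :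
    ¬ ∃ w : α ⊕ β → ℝ, ∀ y : α ⊕ β,
        ∑ x : α ⊕ β, w x * Real.exp (-(t * (completeBipartiteGraph α β).dist x y)) = 1 := by
  rintro ⟨w, hw⟩
  have hq : ((card α : ℝ) - 1) * (card β - 1) * Real.exp (-t) ^ 2 = 1 := by
    rw [← ht, ← Real.exp_nat_mul, ← Real.exp_add]
    simp
  have hexp (d : ℕ) : Real.exp (-t) ^ d = Real.exp (-(t * d)) := by
    rw [← Real.exp_nat_mul, mul_neg, mul_comm]
  refine vecMul_similarityMatrix_completeBipartiteGraph_ne_one hcard hq w (funext fun y => ?_)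
  simpa only [vecMul, dotProduct, similarityMatrix, of_apply, hexp, Pi.one_apply] using hw y

end CompleteBipartite

theorem K32dist_eq_dist (x y : Fin 3 ⊕ Fin 2) :
    K32dist x y = (completeBipartiteGraph (Fin 3) (Fin 2)).dist x y := by
  rcases x with i | i <;> rcases y with j | j
  · by_cases h : i = j <;> simp [K32dist, h, completeBipartiteGraph_dist_inl_inl]
  · simp [K32dist, completeBipartiteGraph_dist_inl_inr]
  · simp [K32dist, completeBipartiteGraph_dist_inr_inl]
  · by_cases h : i = j <;> simp [K32dist, h, completeBipartiteGraph_dist_inr_inr]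

/-- At the scale `t = ln √2 = (1/2) ln 2`, the space `tK_{3,2}` admits no
weighting: there is no `w` with `∑_x w(x) e^{−t·d(x,y)} = 1` for all `y`.
In particular `tK_{3,2}` has no magnitude at this value of `t`. -/
theorem K32_no_weighting :
    ¬ ∃ w : Fin 3 ⊕ Fin 2 → ℝ,
        ∀ y : Fin 3 ⊕ Fin 2,
          ∑ x : Fin 3 ⊕ Fin 2,
            w x * Real.exp (-(((1 / 2 : ℝ) * Real.log 2) * K32dist x y)) = 1 := by
  simp only [K32dist_eq_dist]
  refine K32_no_weighting_general (by simp) ?_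
  rw [← mul_assoc, mul_one_div_cancel two_ne_zero, one_mul, Real.exp_log two_pos]
  norm_num
end

section
/- Let ℓ > 0 and let L_ℓ = [0,ℓ] ⊂ ℝ with the Euclidean metric and Lebesgue measure. Then the spread of L_ℓ satisfies E₀(L_ℓ) := ∫₀^ℓ (∫₀^ℓ e^{−|x−y|} dy)^{−1} dx = arctanh(√(1 − e^{−ℓ}))/√(1 − e^{−ℓ}). -/
/-!
Writing `s² = 1 - e^{-ℓ}`, the inner integral is `2 - e^{-x} - e^{x-ℓ}`, and with `u = e^{x-ℓ}`
completing the square gives `u (2 - e^{-x} - e^{x-ℓ}) = s² - (u - 1)²`. Since `du = u dx`,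
the outer integral is that of `du / (s² - (u - 1)²)`, with primitive `arctanh ((u - 1) / s) / s`. As
`x` runs from `0` to `ℓ`, the argument `(u - 1) / s` runs from `-s` to `0`, and `arctanh` is odd.
-/

/-- The inverse hyperbolic tangent. -/
noncomputable def arctanh (x : ℝ) : ℝ := (1 / 2) * Real.log ((1 + x) / (1 - x))

open Real Set

lemma arctanh_zero : arctanh 0 = 0 := by
  simp [arctanh]

lemma arctanh_neg (x : ℝ) : arctanh (-x) = -arctanh x := by
  rw [arctanh, arctanh, ← sub_eq_add_neg, sub_neg_eq_add, ← inv_div (1 + x), log_inv, mul_neg]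

lemma hasDerivAt_arctanh {x : ℝ} (hx : 1 - x ^ 2 ≠ 0) :
    HasDerivAt arctanh (1 - x ^ 2)⁻¹ x := by
  have hfactor : 1 - x ^ 2 = (1 + x) * (1 - x) := by ring
  obtain ⟨hadd, hsub⟩ : 1 + x ≠ 0 ∧ 1 - x ≠ 0 := mul_ne_zero_iff.mp (hfactor ▸ hx)
  have hquot := ((hasDerivAt_id' x).const_add 1).div ((hasDerivAt_id' x).const_sub 1) hsub
  refine ((hquot.log (div_ne_zero hadd hsub)).const_mul (1 / 2)).congr_deriv ?_
  rw [hfactor, Pi.div_apply]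
  field_simp
  ring

section Interval

variable {a b x : ℝ}

lemma integral_exp_neg_abs_sub_left (hax : a ≤ x) :
    ∫ y in a..x, exp (-|x - y|) = 1 - exp (a - x) := by
  calc ∫ y in a..x, exp (-|x - y|)
      = ∫ y in a..x, exp (y - x) := by
        refine intervalIntegral.integral_congr fun y hy ↦ ?_
        rw [uIcc_of_le hax] at hy
        simp only [abs_of_nonneg (sub_nonneg.mpr hy.2), neg_sub]
    _ = 1 - exp (a - x) := by simp [intervalIntegral.integral_comp_sub_right exp]

lemma integral_exp_neg_abs_sub_right (hxb : x ≤ b) :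
    ∫ y in x..b, exp (-|x - y|) = 1 - exp (x - b) := by
  calc ∫ y in x..b, exp (-|x - y|)
      = ∫ y in x..b, exp (x - y) := by
        refine intervalIntegral.integral_congr fun y hy ↦ ?_
        rw [uIcc_of_le hxb] at hy
        simp only [abs_of_nonpos (sub_nonpos.mpr hy.1), neg_neg]
    _ = 1 - exp (x - b) := by simp [intervalIntegral.integral_comp_sub_left exp]

lemma integral_exp_neg_abs_sub (hx : x ∈ Icc a b) :
    ∫ y in a..b, exp (-|x - y|) = 2 - exp (a - x) - exp (x - b) := by
  have hcont : Continuous fun y ↦ exp (-|x - y|) := by fun_prop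
  rw [← intervalIntegral.integral_add_adjacent_intervals (hcont.intervalIntegrable a x)
    (hcont.intervalIntegrable x b), integral_exp_neg_abs_sub_left hx.1,
    integral_exp_neg_abs_sub_right hx.2]
  ring

lemma exp_sub_mul_exp_sub (a b x : ℝ) : exp (a - x) * exp (x - b) = exp (a - b) := by
  rw [← exp_add, sub_add_sub_cancel]

lemma two_sub_exp_sub_exp_pos (hab : a < b) (hx : x ∈ Icc a b) :
    0 < 2 - exp (a - x) - exp (x - b) := by
  have hleft : exp (a - x) ≤ 1 := exp_le_one_iff.mpr (sub_nonpos.mpr hx.1)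
  have hright : exp (x - b) ≤ 1 := exp_le_one_iff.mpr (sub_nonpos.mpr hx.2)
  have hprod : exp (a - x) * exp (x - b) < 1 := by
    rw [exp_sub_mul_exp_sub, exp_lt_one_iff]
    exact sub_neg.mpr hab
  calc 0 < (1 - exp (a - x)) * (1 - exp (x - b)) + (1 - exp (a - x) * exp (x - b)) :=
        add_pos_of_nonneg_of_pos
          (mul_nonneg (sub_nonneg.mpr hleft) (sub_nonneg.mpr hright)) (sub_pos.mpr hprod)
    _ = 2 - exp (a - x) - exp (x - b) := by ring

lemma exp_mul_two_sub_exp_sub_exp (a b x : ℝ) :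
    exp (x - b) * (2 - exp (a - x) - exp (x - b)) =
      (1 - exp (a - b)) - (exp (x - b) - 1) ^ 2 := by
  linear_combination -exp_sub_mul_exp_sub a b x

lemma hasDerivAt_arctanh_exp_sub_one_div {s : ℝ} (hs : s ≠ 0) (hsq : s ^ 2 = 1 - exp (a - b))
    (hx : 2 - exp (a - x) - exp (x - b) ≠ 0) :
    HasDerivAt (fun x ↦ arctanh ((exp (x - b) - 1) / s) / s)
      (2 - exp (a - x) - exp (x - b))⁻¹ x := by
  have hexp : exp (x - b) ≠ 0 := exp_ne_zero _
  have hone_sub : 1 - ((exp (x - b) - 1) / s) ^ 2 =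
      exp (x - b) * (2 - exp (a - x) - exp (x - b)) / s ^ 2 := by
    rw [exp_mul_two_sub_exp_sub_exp, ← hsq]
    field_simp
  have hne : 1 - ((exp (x - b) - 1) / s) ^ 2 ≠ 0 := by
    rw [hone_sub]
    exact div_ne_zero (mul_ne_zero hexp hx) (pow_ne_zero 2 hs)
  have harg : HasDerivAt (fun x ↦ (exp (x - b) - 1) / s) (exp (x - b) / s) x := by
    simpa using ((((hasDerivAt_id' x).sub_const b).exp).sub_const 1).div_const s
  refine (((hasDerivAt_arctanh hne).comp x harg).div_const s).congr_deriv ?_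
  rw [hone_sub]
  field_simp

lemma integral_inv_two_sub_exp_sub_exp (hab : a < b) :
    ∫ x in a..b, (2 - exp (a - x) - exp (x - b))⁻¹ =
      arctanh √(1 - exp (a - b)) / √(1 - exp (a - b)) := by
  have hpos : 0 < 1 - exp (a - b) := sub_pos.mpr (exp_lt_one_iff.mpr (sub_neg.mpr hab))
  have hs : √(1 - exp (a - b)) ≠ 0 := (sqrt_pos.mpr hpos).ne'
  have hsq : √(1 - exp (a - b)) ^ 2 = 1 - exp (a - b) := sq_sqrt hpos.le
  set s := √(1 - exp (a - b))
  have hne : ∀ x ∈ uIcc a b, 2 - exp (a - x) - exp (x - b) ≠ 0 := fun x hx ↦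
    (two_sub_exp_sub_exp_pos hab (uIcc_of_le hab.le ▸ hx)).ne'
  have hintegrable : IntervalIntegrable (fun x ↦ (2 - exp (a - x) - exp (x - b))⁻¹)
      MeasureTheory.volume a b :=
    (ContinuousOn.inv₀ (by fun_prop) hne).intervalIntegrable
  have hleft : (exp (a - b) - 1) / s = -s := by
    field_simp
    linear_combination hsq
  calc ∫ x in a..b, (2 - exp (a - x) - exp (x - b))⁻¹
      = arctanh ((exp (b - b) - 1) / s) / s - arctanh ((exp (a - b) - 1) / s) / s :=
        intervalIntegral.integral_eq_sub_of_hasDerivAt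
          (fun x hx ↦ hasDerivAt_arctanh_exp_sub_one_div hs hsq (hne x hx)) hintegrable
    _ = arctanh 0 / s - arctanh (-s) / s := by rw [hleft, sub_self, exp_zero, sub_self, zero_div]
    _ = arctanh s / s := by rw [arctanh_zero, arctanh_neg]; ring

end Interval

/-- The spread of the interval `L_ℓ = [0, ℓ]` with Lebesgue measure:
`E₀(L_ℓ) = ∫₀^ℓ (∫₀^ℓ e^{−|x−y|} dy)⁻¹ dx = arctanh(√(1−e^{−ℓ}))/√(1−e^{−ℓ})`. -/
theorem spread_interval (ℓ : ℝ) (hℓ : 0 < ℓ) :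
    (∫ x in (0 : ℝ)..ℓ, (∫ y in (0 : ℝ)..ℓ, Real.exp (-|x - y|))⁻¹) =
      arctanh (Real.sqrt (1 - Real.exp (-ℓ))) / Real.sqrt (1 - Real.exp (-ℓ)) := by
  calc ∫ x in (0 : ℝ)..ℓ, (∫ y in (0 : ℝ)..ℓ, exp (-|x - y|))⁻¹
      = ∫ x in (0 : ℝ)..ℓ, (2 - exp (0 - x) - exp (x - ℓ))⁻¹ := by
        refine intervalIntegral.integral_congr fun x hx ↦ ?_
        rw [uIcc_of_le hℓ.le] at hx
        simp only [integral_exp_neg_abs_sub hx]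
    _ = arctanh √(1 - exp (0 - ℓ)) / √(1 - exp (0 - ℓ)) := integral_inv_two_sub_exp_sub_exp hℓ
    _ = arctanh √(1 - exp (-ℓ)) / √(1 - exp (-ℓ)) := by rw [zero_sub]
end
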